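/- For all n ≥ 1, Hermite's constant satisfies γ_n ≥ (vol(Bⁿ)/2)^{-2/n}, where vol(Bⁿ) = π^{n/2}/Γ(n/2+1) is the volume of the n-dimensional Euclidean unit ball. Consequently γ_n ≥ n/(2πe) for all sufficiently large n. -/

import Mathlib

/-- The length of a shortest nonzero vector of a lattice `L` in Euclidean space. -/
noncomputable def shortestVector (n : ℕ) (L : Submodule ℤ (EuclideanSpace ℝ (Fin n))) : ℝ :=
  sInf {r : ℝ | ∃ v ∈ L, v ≠ 0 ∧ ‖v‖ = r}

/-- Hermite's constant `γ_n`: the supremum over all full-rank lattices `Λ ⊂ ℝⁿ` of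
`λ₁(Λ)² / det(Λ)^(2/n)`, where `λ₁` is the length of a shortest nonzero vector and
`det Λ` is the covolume of `Λ`. -/
noncomputable def hermiteConstant (n : ℕ) : ℝ :=
  sSup {r : ℝ | ∃ (L : Submodule ℤ (EuclideanSpace ℝ (Fin n)))
    (_ : DiscreteTopology L), IsZLattice ℝ L ∧
    r = (shortestVector n L) ^ 2 / (ZLattice.covolume L) ^ ((2 : ℝ) / n)}

/-- The volume of the `n`-dimensional Euclidean unit ball, `π^(n/2)/Γ(n/2+1)`. -/
noncomputable def unitBallVolume (n : ℕ) : ℝ :=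
  Real.pi ^ ((n : ℝ) / 2) / Real.Gamma ((n : ℝ) / 2 + 1)

/-!
Fix a lattice `Λ`, a large prime `p`, and a radius `r` such that the ball of radius `r` contains
fewer than `2 * p` points of `Λ`. If such a nonzero point were `p • w` with `w ∈ Λ`, then the
`2 * p` points `k • w` with `0 < |k| ≤ p` would all lie in the ball; so every nonzero point of
`Λ` in the ball is nonzero modulo `p`. These points come in pairs `±z`, hence the homomorphisms
`Λ → ℤ/p` vanishing at one of them lie on fewer than `p` hyperplanes, which cannot cover the
`𝔽_p`-vector space of all homomorphisms. The kernel of a homomorphism avoiding these hyperplanes is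
a sublattice of index at most `p` with no nonzero vector in the ball. Since the number of points
of `Λ` in the ball is asymptotic to `vol(Bⁿ) * r ^ n / covol(Λ)`, letting `p → ∞` gives every
density below the Minkowski–Hlawka bound. Minkowski's convex body theorem bounds the supremum
defining `γ_n`, which therefore dominates these densities, and the linear bound follows from
`Γ(x + 1) ≥ ∫_x^∞ t ^ x * e ^ (-t) dt ≥ x ^ x * e ^ (-x)`.
-/

open Filter MeasureTheory Metric Module Topology

section HomomorphismsModPrime

lemma exists_forall_notMem_of_card_lt {K M : Type*} [Field K] [AddCommGroup M] [Module K M]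
    {s : Finset (Submodule K M)} (hs : ∀ W ∈ s, W ≠ ⊤) (hcard : s.card < ENat.card K) :
    ∃ x, ∀ W ∈ s, x ∉ W := by
  have hunion := Submodule.iUnion_ssubset_of_forall_ne_top_of_card_lt s.attach
    (fun W : s ↦ W.1) (fun W ↦ hs W W.2) (by rwa [Finset.card_attach])
  simpa [Set.ssubset_univ_iff, Set.iUnion_eq_univ_iff] using hunion

variable {Λ : Type*} [AddCommGroup Λ]

lemma two_mul_le_card_of_forall_zsmul_mem [IsAddTorsionFree Λ] {S : Finset Λ} {w : Λ}
    (hw : w ≠ 0) {m : ℕ} (hS : ∀ k : ℤ, k ≠ 0 → |k| ≤ m → k • w ∈ S) : 2 * m ≤ S.card := by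
  calc 2 * m = ((Finset.Icc (-m : ℤ) m).erase 0).card := by
        rw [Finset.card_erase_of_mem (by simp), Int.card_Icc]
        lia
    _ ≤ S.card := Finset.card_le_card_of_injOn (· • w)
        (fun k hk ↦ by
          rw [Finset.mem_coe, Finset.mem_erase, Finset.mem_Icc] at hk
          exact hS k hk.1 (abs_le.mpr hk.2))
        (smul_left_injective ℤ hw).injOn

lemma exists_linearMap_zmod_ne_zero [Free ℤ Λ] {m : ℕ} {z : Λ} (hz : ∀ w, (m : ℤ) • w ≠ z) :
    ∃ f : Λ →ₗ[ℤ] ZMod m, f z ≠ 0 := by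
  let b := Free.chooseBasis ℤ Λ
  by_contra! hf
  have hdvd (i) : (m : ℤ) ∣ b.repr z i := by
    simpa [ZMod.intCast_zmod_eq_zero_iff_dvd] using
      hf ((Int.castAddHom (ZMod m)).toIntLinearMap ∘ₗ b.coord i)
  refine hz (b.repr.symm ((b.repr z).mapRange (· / (m : ℤ)) (Int.zero_ediv _))) ?_
  apply b.repr.injective
  ext i
  simp [Int.mul_ediv_cancel' (hdvd i)]

variable {p : ℕ} [Fact p.Prime] {S : Finset Λ}

lemma exists_linearMap_zmod_forall_ne_zero_of_neg_mem [IsAddTorsionFree Λ]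
    (hneg : ∀ z ∈ S, -z ∈ S) (hsep : ∀ z ∈ S, ∃ f : Λ →ₗ[ℤ] ZMod p, f z ≠ 0)
    (hcard : S.card < 2 * p) : ∃ f : Λ →ₗ[ℤ] ZMod p, ∀ z ∈ S, f z ≠ 0 := by
  classical
  let W (z : Λ) : Submodule (ZMod p) (Λ →ₗ[ℤ] ZMod p) :=
    LinearMap.ker (LinearMap.applyₗ' (ZMod p) z)
  have mem_W {z : Λ} {f : Λ →ₗ[ℤ] ZMod p} : f ∈ W z ↔ f z = 0 := by simp [W]
  have W_neg (z : Λ) : W (-z) = W z := by ext; simp [mem_W]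
  have W_ne_top : ∀ U ∈ S.image W, U ≠ ⊤ := by
    rintro U hU rfl
    obtain ⟨z, hz, hWz⟩ := Finset.mem_image.mp hU
    obtain ⟨f, hf⟩ := hsep z hz
    exact hf (mem_W.mp (hWz ▸ Submodule.mem_top))
  have two_le_card_fiber : ∀ U ∈ S.image W, 2 ≤ (S.filter (W · = U)).card := by
    intro U hU
    obtain ⟨z, hz, rfl⟩ := Finset.mem_image.mp hU
    have hz0 : z ≠ 0 := by
      rintro rfl
      simpa using hsep 0 hz
    exact Finset.one_lt_card.mpr
      ⟨z, by simp [hz], -z, by simp [hneg z hz, W_neg], self_ne_neg.mpr hz0⟩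
  have card_image_lt : (S.image W).card < p := by
    have := Finset.mul_card_image_le_card S 2 two_le_card_fiber
    lia
  obtain ⟨f, hf⟩ := exists_forall_notMem_of_card_lt W_ne_top (by simpa using card_image_lt)
  exact ⟨f, fun z hz hfz ↦ hf (W z) (Finset.mem_image_of_mem W hz) (mem_W.mpr hfz)⟩

lemma exists_linearMap_zmod_forall_ne_zero [Free ℤ Λ] (h0 : 0 ∉ S)
    (hS : ∀ (k l : ℤ) (w : Λ), k ≠ 0 → |k| ≤ |l| → l • w ∈ S → k • w ∈ S)
    (hcard : S.card < 2 * p) : ∃ f : Λ →ₗ[ℤ] ZMod p, ∀ z ∈ S, f z ≠ 0 := by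
  have : IsAddTorsionFree Λ := .of_isTorsionFree ℤ Λ
  refine exists_linearMap_zmod_forall_ne_zero_of_neg_mem (fun z hz ↦ ?_) (fun z hz ↦ ?_) hcard
  · simpa using hS (-1) 1 z (by simp) (by simp) (by simpa using hz)
  · refine exists_linearMap_zmod_ne_zero fun w hw ↦ hcard.not_ge ?_
    subst hw
    have hw0 : w ≠ 0 := by
      rintro rfl
      exact h0 (by simpa using hz)
    exact two_mul_le_card_of_forall_zsmul_mem hw0
      fun k hk hkp ↦ hS k p w hk (by rwa [Nat.abs_cast]) hz

end HomomorphismsModPrime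

section KernelSublattice

/-- The kernel of a homomorphism `f` defined on a lattice `L`, as a sublattice of the ambient
space. For `A = ℤ/p` and `L = ℤⁿ` these are the lattices `{z | ∑ i, a i * z i ≡ 0 [ZMOD p]}`. -/
def kerSublattice {E A : Type*} [AddCommGroup E] [AddCommGroup A] {L : Submodule ℤ E}
    (f : L →ₗ[ℤ] A) : Submodule ℤ E :=
  (LinearMap.ker f).map L.subtype

section Algebra

variable {E A : Type*} [AddCommGroup E] [AddCommGroup A] {L : Submodule ℤ E}

lemma coe_mem_kerSublattice {f : L →ₗ[ℤ] A} {z : L} : (z : E) ∈ kerSublattice f ↔ f z = 0 := by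
  simp [kerSublattice]

lemma kerSublattice_le (f : L →ₗ[ℤ] A) : kerSublattice f ≤ L :=
  Submodule.map_subtype_le _ _

lemma natCard_zsmul_mem_kerSublattice (f : L →ₗ[ℤ] A) {v : E} (hv : v ∈ L) :
    (Nat.card A : ℤ) • v ∈ kerSublattice f := by
  lift v to L using hv
  rw [← Submodule.coe_smul, coe_mem_kerSublattice, map_smul, natCast_zsmul]
  exact card_nsmul_eq_zero'

lemma relIndex_kerSublattice_le [Finite A] (f : L →ₗ[ℤ] A) :
    (kerSublattice f).toAddSubgroup.relIndex L.toAddSubgroup ≤ Nat.card A := by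
  have hker : (kerSublattice f).toAddSubgroup.addSubgroupOf L.toAddSubgroup =
      f.toAddMonoidHom.ker := by
    ext z
    exact coe_mem_kerSublattice (f := f) (z := z)
  rw [AddSubgroup.relIndex, hker, AddSubgroup.index_ker]
  exact AddSubgroup.card_le_card_addGroup _

end Algebra

lemma isZLattice_of_forall_zsmul_mem {E : Type*} [NormedAddCommGroup E] [NormedSpace ℝ E]
    {L₁ L₂ : Submodule ℤ E} [DiscreteTopology L₁] [DiscreteTopology L₂] [IsZLattice ℝ L₂]
    {m : ℤ} (hm : m ≠ 0) (h : ∀ v ∈ L₂, m • v ∈ L₁) : IsZLattice ℝ L₁ where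
  span_top := by
    rw [eq_top_iff, ← IsZLattice.span_top (K := ℝ) (L := L₂), Submodule.span_le]
    intro v hv
    have hmv : (m : ℝ) • v ∈ Submodule.span ℝ (L₁ : Set E) := by
      rw [Int.cast_smul_eq_zsmul]
      exact Submodule.subset_span (h v hv)
    exact (Submodule.smul_mem_iff _ (Int.cast_ne_zero.mpr hm)).mp hmv

variable {E A : Type*} [NormedAddCommGroup E] [AddCommGroup A] {L : Submodule ℤ E}
  [DiscreteTopology L]

instance (f : L →ₗ[ℤ] A) : DiscreteTopology (kerSublattice f) :=
  DiscreteTopology.of_subset (X := E) (t := kerSublattice f) inferInstance (kerSublattice_le f)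

instance [NormedSpace ℝ E] [IsZLattice ℝ L] [Finite A] (f : L →ₗ[ℤ] A) :
    IsZLattice ℝ (kerSublattice f) :=
  isZLattice_of_forall_zsmul_mem (Int.natCast_ne_zero.mpr Nat.card_pos.ne')
    fun _ ↦ natCard_zsmul_mem_kerSublattice f

lemma covolume_kerSublattice_le [InnerProductSpace ℝ E] [FiniteDimensional ℝ E]
    [MeasurableSpace E] [BorelSpace E] [IsZLattice ℝ L] [Finite A] (f : L →ₗ[ℤ] A) :
    ZLattice.covolume (kerSublattice f) ≤ Nat.card A * ZLattice.covolume L := by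
  have hindex := ZLattice.covolume_div_covolume_eq_relIndex' _ _ (kerSublattice_le f)
  rw [div_eq_iff (ZLattice.covolume_ne_zero L volume)] at hindex
  rw [hindex]
  have := ZLattice.covolume_pos L volume
  gcongr
  exact relIndex_kerSublattice_le f

end KernelSublattice

section MinkowskiHlawka

lemma finite_setOf_norm_le {E : Type*} [NormedAddCommGroup E] [ProperSpace E]
    (L : Submodule ℤ E) [DiscreteTopology L] (r : ℝ) : {z : L | ‖z‖ ≤ r}.Finite := by
  have hclosed : IsClosed (L : Set E) := AddSubgroup.isClosed_of_discrete (H := L.toAddSubgroup)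
  have hfinite : (closedBall (0 : E) r ∩ L).Finite :=
    finite_isBounded_inter_isClosed DiscreteTopology.isDiscrete isBounded_closedBall hclosed
  exact (hfinite.preimage Subtype.val_injective.injOn).subset fun z hz ↦ by simpa using hz

lemma exists_linearMap_zmod_forall_norm_le_ne_zero {E : Type*} [NormedAddCommGroup E]
    [NormedSpace ℝ E] [FiniteDimensional ℝ E] {L : Submodule ℤ E} [DiscreteTopology L]
    [IsZLattice ℝ L] {p : ℕ} [Fact p.Prime] {r : ℝ} (hcard : {z : L | ‖z‖ ≤ r}.ncard < 2 * p) :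
    ∃ f : L →ₗ[ℤ] ZMod p, ∀ z : L, z ≠ 0 → ‖z‖ ≤ r → f z ≠ 0 := by
  have : ProperSpace E := FiniteDimensional.proper_real E
  have : Free ℤ L := ZLattice.module_free ℝ L
  have hfinite := (finite_setOf_norm_le L r).sdiff (t := {0})
  have hmem (z : L) : z ∈ hfinite.toFinset ↔ ‖z‖ ≤ r ∧ z ≠ 0 := by simp
  have norm_zsmul_coe (k : ℤ) (w : L) : ‖k • w‖ = |(k : ℝ)| * ‖w‖ := norm_zsmul ℝ k (w : E)
  obtain ⟨f, hf⟩ := exists_linearMap_zmod_forall_ne_zero (p := p) (S := hfinite.toFinset)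
    (by simp)
    (fun k l w hk hkl hlw ↦ by
      rw [hmem] at hlw ⊢
      refine ⟨le_trans ?_ hlw.1, smul_ne_zero hk (right_ne_zero_of_smul hlw.2)⟩
      rw [norm_zsmul_coe, norm_zsmul_coe]
      exact mul_le_mul_of_nonneg_right (by exact_mod_cast hkl) (norm_nonneg _))
    ((Set.ncard_eq_toFinset_card _ hfinite).symm.trans_le
      (Set.ncard_le_ncard Set.sdiff_subset (finite_setOf_norm_le L r)) |>.trans_lt hcard)
  exact ⟨f, fun z hz hzr ↦ hf z ((hmem z).mpr ⟨hzr, hz⟩)⟩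

variable {E : Type*} [NormedAddCommGroup E] [InnerProductSpace ℝ E] [FiniteDimensional ℝ E]
  [MeasurableSpace E] [BorelSpace E] [Nontrivial E]
  (L : Submodule ℤ E) [DiscreteTopology L] [IsZLattice ℝ L]

lemma tendsto_ncard_norm_le_div_pow :
    Tendsto (fun r : ℝ ↦ ({z : L | ‖z‖ ≤ r}.ncard : ℝ) / r ^ finrank ℝ E) atTop
      (𝓝 (volume.real (closedBall (0 : E) 1) / ZLattice.covolume L)) := by
  have hn : finrank ℝ E ≠ 0 := finrank_pos.ne'
  have hball {r : ℝ} (hr : 0 ≤ r) :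
      {x ∈ (Set.univ : Set E) | ‖x‖ ^ finrank ℝ E ≤ r ^ finrank ℝ E} = closedBall 0 r := by
    ext x
    simp [pow_le_pow_iff_left₀ (norm_nonneg x) hr hn]
  have hunit := hball zero_le_one
  rw [one_pow] at hunit
  have hcount := ZLattice.covolume.tendsto_card_le_div' L (X := Set.univ)
    (F := fun x ↦ ‖x‖ ^ finrank ℝ E) (fun _ _ _ _ ↦ Set.mem_univ _)
    (fun x r hr ↦ by rw [norm_smul, mul_pow, Real.norm_of_nonneg hr])
    (by rw [hunit]; exact isBounded_closedBall)
    (by rw [hunit]; exact measurableSet_closedBall)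
    (by rw [hunit, frontier_closedBall _ one_ne_zero]; exact Measure.addHaar_sphere _ _ _)
  rw [hunit] at hcount
  refine (hcount.comp (tendsto_pow_atTop hn)).congr' ?_
  filter_upwards [eventually_ge_atTop 0] with r hr
  have himage : closedBall (0 : E) r ∩ L = Subtype.val '' {z : L | ‖z‖ ≤ r} := by
    ext x
    simp [and_comm]
  rw [Function.comp_apply, hball hr, himage, Nat.card_coe_set_eq,
    Set.ncard_image_of_injective _ Subtype.val_injective]

lemma exists_prime_ncard_norm_le_lt {c : ℝ} (hc : 0 < c)
    (hvol : c * volume.real (closedBall (0 : E) 1) < 2) :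
    ∃ (p : ℕ) (r : ℝ), p.Prime ∧ 0 ≤ r ∧ r ^ finrank ℝ E = c * (p * ZLattice.covolume L) ∧
      {z : L | ‖z‖ ≤ r}.ncard < 2 * p := by
  have hn : finrank ℝ E ≠ 0 := finrank_pos.ne'
  have hcov := ZLattice.covolume_pos L volume
  let r (p : ℕ) : ℝ := (c * (p * ZLattice.covolume L)) ^ (finrank ℝ E : ℝ)⁻¹
  have r_pow (p : ℕ) : r p ^ finrank ℝ E = c * (p * ZLattice.covolume L) :=
    Real.rpow_inv_natCast_pow (by positivity) hn
  have r_atTop : Tendsto r atTop atTop :=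
    (tendsto_rpow_atTop (by positivity)).comp
      ((tendsto_natCast_atTop_atTop.atTop_mul_const hcov).const_mul_atTop hc)
  have hlimit : volume.real (closedBall (0 : E) 1) / ZLattice.covolume L <
      2 / (c * ZLattice.covolume L) := by
    rw [div_lt_div_iff₀ hcov (by positivity)]
    nlinarith
  have hcount := ((tendsto_ncard_norm_le_div_pow L).comp r_atTop).eventually_lt_const hlimit
  have hprimes : ∃ᶠ p in atTop, Nat.Prime p :=
    Nat.frequently_atTop_iff_infinite.mpr Nat.infinite_setOfPred_prime
  obtain ⟨p, hp, hlt⟩ := (hprimes.and_eventually hcount).exists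
  refine ⟨p, r p, hp, by positivity, r_pow p, ?_⟩
  have hp0 : (0 : ℝ) < p := mod_cast hp.pos
  have ncard_lt : ({z : L | ‖z‖ ≤ r p}.ncard : ℝ) < 2 * p := by
    calc ({z : L | ‖z‖ ≤ r p}.ncard : ℝ)
        < 2 / (c * ZLattice.covolume L volume) * r p ^ finrank ℝ E :=
          (div_lt_iff₀ (by rw [r_pow]; positivity)).mp hlt
      _ = 2 * p := by
          rw [r_pow]
          field_simp
  exact_mod_cast ncard_lt

theorem exists_sublattice_forall_mul_covolume_lt_norm_pow {c : ℝ} (hc : 0 < c)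
    (hvol : c * volume.real (closedBall (0 : E) 1) < 2) :
    ∃ (M : Submodule ℤ E) (_ : DiscreteTopology M), IsZLattice ℝ M ∧ M ≤ L ∧
      ∀ v ∈ M, v ≠ 0 → c * ZLattice.covolume M < ‖v‖ ^ finrank ℝ E := by
  obtain ⟨p, r, hp, hr, hrpow, hcard⟩ := exists_prime_ncard_norm_le_lt L hc hvol
  have : Fact p.Prime := ⟨hp⟩
  obtain ⟨f, hf⟩ := exists_linearMap_zmod_forall_norm_le_ne_zero hcard
  refine ⟨kerSublattice f, inferInstance, inferInstance, kerSublattice_le f, fun v hv hv0 ↦ ?_⟩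
  have hrv : r < ‖v‖ := by
    lift v to L using kerSublattice_le f hv
    by_contra! hvr
    exact hf v (by simpa using hv0) hvr (coe_mem_kerSublattice.mp hv)
  calc c * ZLattice.covolume (kerSublattice f)
      ≤ c * (p * ZLattice.covolume L) := by
        have := covolume_kerSublattice_le f
        rw [Nat.card_zmod] at this
        gcongr
    _ = r ^ finrank ℝ E := hrpow.symm
    _ < ‖v‖ ^ finrank ℝ E := pow_lt_pow_left₀ hrv hr finrank_pos.ne'

end MinkowskiHlawka

section MinkowskiConvexBody

lemma measureReal_ball_le_two_pow_mul_covolume {E : Type*} [NormedAddCommGroup E]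
    [NormedSpace ℝ E] [FiniteDimensional ℝ E] [MeasurableSpace E] [BorelSpace E]
    (μ : Measure E) [μ.IsAddHaarMeasure] (L : Submodule ℤ E) [DiscreteTopology L]
    [IsZLattice ℝ L] {r : ℝ} (hr : ∀ v ∈ L, v ≠ 0 → r ≤ ‖v‖) :
    μ.real (ball 0 r) ≤ 2 ^ finrank ℝ E * ZLattice.covolume L μ := by
  let F := ZSpan.fundamentalDomain ((Free.chooseBasis ℤ L).ofZLatticeBasis ℝ L)
  have hF : IsAddFundamentalDomain L F μ := ZLattice.isAddFundamentalDomain _ μ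
  have hF_finite : μ F ≠ ⊤ := (ZSpan.fundamentalDomain_isBounded _).measure_lt_top.ne
  have : Countable L.toAddSubgroup := inferInstanceAs (Countable L)
  have hmeasure : μ (ball 0 r) ≤ μ F * 2 ^ finrank ℝ E := by
    by_contra! hlt
    obtain ⟨v, hv0, hv⟩ := exists_ne_zero_mem_lattice_of_measure_mul_two_pow_lt_measure
      (L := L.toAddSubgroup) hF (fun x hx ↦ by simpa using hx) (convex_ball 0 r) hlt
    exact (hr v v.2 (by simpa using hv0)).not_gt (mem_ball_zero_iff.mp hv)
  calc μ.real (ball 0 r)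
      ≤ (μ F * 2 ^ finrank ℝ E).toReal :=
        ENNReal.toReal_mono (ENNReal.mul_ne_top hF_finite (by finiteness)) hmeasure
    _ = 2 ^ finrank ℝ E * ZLattice.covolume L μ := by
        rw [ZLattice.covolume_eq_measure_fundamentalDomain L μ hF, measureReal_def,
          ENNReal.toReal_mul, ENNReal.toReal_pow, ENNReal.toReal_ofNat, mul_comm]

end MinkowskiConvexBody

section UnitBallVolume

lemma rpow_self_mul_exp_neg_le_Gamma_add_one {x : ℝ} (hx : 0 ≤ x) :
    x ^ x * Real.exp (-x) ≤ Real.Gamma (x + 1) := by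
  have hint : IntegrableOn (fun t ↦ Real.exp (-t) * t ^ x) (Set.Ioi 0) := by
    simpa using Real.GammaIntegral_convergent (show 0 < x + 1 by positivity)
  have hsub : Set.Ioi x ⊆ Set.Ioi 0 := Set.Ioi_subset_Ioi hx
  calc x ^ x * Real.exp (-x) = ∫ t in Set.Ioi x, Real.exp (-t) * x ^ x := by
        rw [integral_mul_const, integral_exp_neg_Ioi, mul_comm]
    _ ≤ ∫ t in Set.Ioi x, Real.exp (-t) * t ^ x := by
        refine setIntegral_mono_on ((integrableOn_exp_neg_Ioi x).mul_const _)
          (hint.mono_set hsub) measurableSet_Ioi fun t ht ↦ ?_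
        have : x < t := ht
        gcongr
    _ ≤ ∫ t in Set.Ioi 0, Real.exp (-t) * t ^ x := by
        refine setIntegral_mono_set hint ?_ hsub.eventuallyLE
        filter_upwards [ae_restrict_mem measurableSet_Ioi] with t ht
        have : 0 < t := ht
        rw [Pi.zero_apply]
        positivity
    _ = Real.Gamma (x + 1) := by
        rw [Real.Gamma_eq_integral (by positivity), add_sub_cancel_right]

lemma unitBallVolume_pos (n : ℕ) : 0 < unitBallVolume n :=
  div_pos (Real.rpow_pos_of_pos Real.pi_pos _) (Real.Gamma_pos_of_pos (by positivity))

variable (n : ℕ) [NeZero n]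

lemma volume_real_closedBall_eq_unitBallVolume :
    volume.real (closedBall (0 : EuclideanSpace ℝ (Fin n)) 1) = unitBallVolume n := by
  rw [measureReal_def, EuclideanSpace.volume_closedBall, ENNReal.ofReal_one, one_pow, one_mul,
    Fintype.card_fin, Real.sqrt_eq_rpow, ← Real.rpow_mul_natCast Real.pi_nonneg,
    one_div_mul_eq_div]
  exact ENNReal.toReal_ofReal (unitBallVolume_pos n).le

lemma unitBallVolume_le_rpow :
    unitBallVolume n ≤ (2 * Real.pi * Real.exp 1 / n) ^ ((n : ℝ) / 2) := by
  have hn : (0 : ℝ) < n := mod_cast NeZero.pos n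
  calc unitBallVolume n
      ≤ Real.pi ^ ((n : ℝ) / 2) / ((n / 2 : ℝ) ^ ((n : ℝ) / 2) * Real.exp (-(n / 2))) := by
        rw [unitBallVolume]
        gcongr
        exact rpow_self_mul_exp_neg_le_Gamma_add_one (by positivity)
    _ = (Real.pi / (n / 2) * Real.exp 1) ^ ((n : ℝ) / 2) := by
        rw [Real.mul_rpow (by positivity) (by positivity),
          Real.div_rpow Real.pi_nonneg (by positivity), ← Real.exp_mul, one_mul, Real.exp_neg]
        field_simp
    _ = (2 * Real.pi * Real.exp 1 / n) ^ ((n : ℝ) / 2) := by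
        congr 1
        field_simp

lemma div_two_mul_pi_mul_exp_one_le_rpow :
    n / (2 * Real.pi * Real.exp 1) ≤ (unitBallVolume n / 2) ^ (-(2 : ℝ) / n) := by
  have hn : (0 : ℝ) < n := mod_cast NeZero.pos n
  have hpos := unitBallVolume_pos n
  calc n / (2 * Real.pi * Real.exp 1)
      = ((2 * Real.pi * Real.exp 1 / n) ^ ((n : ℝ) / 2)) ^ (-(2 : ℝ) / n) := by
        rw [← Real.rpow_mul (by positivity), show (n : ℝ) / 2 * (-2 / n) = -1 by field_simp,
          Real.rpow_neg_one, inv_div]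
    _ ≤ (unitBallVolume n / 2) ^ (-(2 : ℝ) / n) := by
        refine Real.rpow_le_rpow_of_nonpos (by positivity) ?_
          (div_nonpos_of_nonpos_of_nonneg (by norm_num) hn.le)
        exact (half_le_self hpos.le).trans (unitBallVolume_le_rpow n)

end UnitBallVolume

section HermiteConstant

variable {n : ℕ} {L : Submodule ℤ (EuclideanSpace ℝ (Fin n))}

lemma shortestVector_nonneg (L : Submodule ℤ (EuclideanSpace ℝ (Fin n))) :
    0 ≤ shortestVector n L :=
  Real.sInf_nonneg (by rintro _ ⟨v, -, -, rfl⟩; exact norm_nonneg v)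

lemma shortestVector_le_norm {v : EuclideanSpace ℝ (Fin n)} (hv : v ∈ L) (hv0 : v ≠ 0) :
    shortestVector n L ≤ ‖v‖ :=
  csInf_le ⟨0, by rintro _ ⟨w, -, -, rfl⟩; exact norm_nonneg w⟩ ⟨v, hv, hv0, rfl⟩

lemma shortestVector_pow_div_covolume_nonneg (L : Submodule ℤ (EuclideanSpace ℝ (Fin n)))
    [DiscreteTopology L] [IsZLattice ℝ L] :
    0 ≤ shortestVector n L ^ n / ZLattice.covolume L :=
  div_nonneg (pow_nonneg (shortestVector_nonneg L) n) (ZLattice.covolume_pos L volume).le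

lemma hermiteConstant_nonneg (n : ℕ) : 0 ≤ hermiteConstant n := by
  refine Real.sSup_nonneg ?_
  rintro _ ⟨L, _, _, rfl⟩
  have := ZLattice.covolume_pos L volume
  positivity

variable [NeZero n] [DiscreteTopology L] [IsZLattice ℝ L]

lemma le_shortestVector {r : ℝ} (hr : ∀ v ∈ L, v ≠ 0 → r ≤ ‖v‖) : r ≤ shortestVector n L := by
  have hL : L ≠ ⊥ := by
    rintro rfl
    simpa using IsZLattice.span_top (K := ℝ) (L := (⊥ : Submodule ℤ (EuclideanSpace ℝ (Fin n))))
  obtain ⟨v, hv, hv0⟩ := Submodule.exists_mem_ne_zero_of_ne_bot hL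
  refine le_csInf ⟨‖v‖, v, hv, hv0, rfl⟩ ?_
  rintro _ ⟨w, hw, hw0, rfl⟩
  exact hr w hw hw0

lemma le_shortestVector_pow {a : ℝ} (ha : 0 ≤ a) (h : ∀ v ∈ L, v ≠ 0 → a ≤ ‖v‖ ^ n) :
    a ≤ shortestVector n L ^ n := by
  have hroot : (a ^ (n : ℝ)⁻¹) ^ n = a := Real.rpow_inv_natCast_pow ha (NeZero.ne n)
  rw [← hroot]
  gcongr
  refine le_shortestVector fun v hv hv0 ↦ le_of_pow_le_pow_left₀ (NeZero.ne n) (norm_nonneg v) ?_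
  rw [hroot]
  exact h v hv hv0

variable (L)

lemma shortestVector_pow_div_covolume_le :
    shortestVector n L ^ n / ZLattice.covolume L ≤ 2 ^ n / unitBallVolume n := by
  rw [div_le_div_iff₀ (ZLattice.covolume_pos L volume) (unitBallVolume_pos n)]
  calc shortestVector n L ^ n * unitBallVolume n
      = volume.real (ball (0 : EuclideanSpace ℝ (Fin n)) (shortestVector n L)) := by
        rw [← Measure.addHaar_real_closedBall_eq_addHaar_real_ball,
          Measure.addHaar_real_closedBall' _ _ (shortestVector_nonneg L),
          finrank_euclideanSpace_fin, volume_real_closedBall_eq_unitBallVolume]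
    _ ≤ 2 ^ n * ZLattice.covolume L volume := by
        simpa using measureReal_ball_le_two_pow_mul_covolume volume L
          fun v hv hv0 ↦ shortestVector_le_norm hv hv0

lemma sq_shortestVector_div_covolume_rpow_eq :
    shortestVector n L ^ 2 / ZLattice.covolume L ^ ((2 : ℝ) / n) =
      (shortestVector n L ^ n / ZLattice.covolume L) ^ ((2 : ℝ) / n) := by
  have hnonneg := shortestVector_nonneg L
  rw [Real.div_rpow (by positivity) (ZLattice.covolume_pos L volume).le,
    ← Real.rpow_natCast _ n, ← Real.rpow_mul hnonneg, mul_div_cancel₀ _ (NeZero.ne (n : ℝ)),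
    Real.rpow_two]

lemma rpow_shortestVector_pow_div_covolume_le_hermiteConstant :
    (shortestVector n L ^ n / ZLattice.covolume L) ^ ((2 : ℝ) / n) ≤ hermiteConstant n := by
  refine le_csSup ⟨(2 ^ n / unitBallVolume n) ^ ((2 : ℝ) / n), ?_⟩
    ⟨L, ‹_›, ‹_›, (sq_shortestVector_div_covolume_rpow_eq L).symm⟩
  rintro _ ⟨M, _, _, rfl⟩
  rw [sq_shortestVector_div_covolume_rpow_eq M]
  exact Real.rpow_le_rpow (shortestVector_pow_div_covolume_nonneg M)
    (shortestVector_pow_div_covolume_le M) (by positivity)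

lemma shortestVector_pow_div_covolume_le_hermiteConstant_rpow :
    shortestVector n L ^ n / ZLattice.covolume L ≤ hermiteConstant n ^ ((n : ℝ) / 2) := by
  have hnonneg := shortestVector_pow_div_covolume_nonneg L
  calc shortestVector n L ^ n / ZLattice.covolume L volume
      = ((shortestVector n L ^ n / ZLattice.covolume L volume) ^ ((2 : ℝ) / n)) ^
          ((n : ℝ) / 2) := by
        rw [← inv_div (n : ℝ), Real.rpow_inv_rpow hnonneg
          (div_ne_zero (NeZero.ne (n : ℝ)) two_ne_zero)]
    _ ≤ hermiteConstant n ^ ((n : ℝ) / 2) :=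
        Real.rpow_le_rpow (Real.rpow_nonneg hnonneg _)
          (rpow_shortestVector_pow_div_covolume_le_hermiteConstant L) (by positivity)

variable (n) in
lemma two_div_unitBallVolume_le_hermiteConstant_rpow :
    2 / unitBallVolume n ≤ hermiteConstant n ^ ((n : ℝ) / 2) := by
  refine le_of_forall_lt_imp_le_of_dense fun c hc ↦ ?_
  rcases le_or_gt c 0 with hc0 | hc0
  · exact hc0.trans (Real.rpow_nonneg (hermiteConstant_nonneg n) _)
  rw [lt_div_iff₀ (unitBallVolume_pos n), ← volume_real_closedBall_eq_unitBallVolume] at hc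
  obtain ⟨M, _, _, -, hM⟩ := exists_sublattice_forall_mul_covolume_lt_norm_pow
    (Submodule.span ℤ (Set.range (EuclideanSpace.basisFun (Fin n) ℝ).toBasis)) hc0 hc
  have hcov := ZLattice.covolume_pos M volume
  calc c ≤ shortestVector n M ^ n / ZLattice.covolume M := by
        rw [le_div_iff₀ hcov]
        exact le_shortestVector_pow (by positivity) fun v hv hv0 ↦ by simpa using (hM v hv hv0).le
    _ ≤ hermiteConstant n ^ ((n : ℝ) / 2) :=
        shortestVector_pow_div_covolume_le_hermiteConstant_rpow M

variable (n) in
lemma unitBallVolume_div_two_rpow_le_hermiteConstant :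
    (unitBallVolume n / 2) ^ (-(2 : ℝ) / n) ≤ hermiteConstant n := by
  have hpos := unitBallVolume_pos n
  calc (unitBallVolume n / 2) ^ (-(2 : ℝ) / n) = (2 / unitBallVolume n) ^ ((2 : ℝ) / n) := by
        rw [neg_div, Real.rpow_neg (by positivity), ← Real.inv_rpow (by positivity), inv_div]
    _ ≤ (hermiteConstant n ^ ((n : ℝ) / 2)) ^ ((2 : ℝ) / n) := by
        gcongr
        exact two_div_unitBallVolume_le_hermiteConstant_rpow n
    _ = hermiteConstant n := by
        rw [← inv_div (n : ℝ), Real.rpow_rpow_inv (hermiteConstant_nonneg n)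
          (div_ne_zero (NeZero.ne (n : ℝ)) two_ne_zero)]

end HermiteConstant

theorem hermite_lower_bound_general (n : ℕ) (hn : 1 ≤ n) :
    (unitBallVolume n / 2) ^ (-(2 : ℝ) / n) ≤ hermiteConstant n ∧
      n / (2 * Real.pi * Real.exp 1) ≤ hermiteConstant n := by
  have : NeZero n := .of_pos hn
  have hbound := unitBallVolume_div_two_rpow_le_hermiteConstant n
  exact ⟨hbound, (div_two_mul_pi_mul_exp_one_le_rpow n).trans hbound⟩

/-- Minkowski–Hlawka lower bound for Hermite's constant: `γ_n ≥ (vol(Bⁿ)/2)^(-2/n)`;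
consequently `γ_n ≥ n/(2πe)` for all sufficiently large `n`. -/
theorem hermite_lower_bound :
    (∀ n : ℕ, 1 ≤ n → hermiteConstant n ≥ (unitBallVolume n / 2) ^ (-(2 : ℝ) / n)) ∧
    ∀ᶠ n : ℕ in Filter.atTop, hermiteConstant n ≥ n / (2 * Real.pi * Real.exp 1) := by
  refine ⟨fun n hn ↦ (hermite_lower_bound_general n hn).1, ?_⟩
  filter_upwards [eventually_ge_atTop 1] with n hn using (hermite_lower_bound_general n hn).2
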